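/- Let T° > 0, b₀ ∈ [0, 1] and ε₀ > 0. Then: (a) Γ₁(b₀, ε₀) > T° if and only if b̃(T°, b₀, ε₀) < 1; (b) Γ₁(b₀, ε₀) < T° if and only if b̃(T°, b₀, ε₀) > 1; (c) Γ₁(b₀, ε₀) = T° if and only if b̃(T°, b₀, ε₀) = 1. -/

import Mathlib

open Real ENNReal

noncomputable def f₁ (w θ η W c₁ c₂ τ b₀ ε₀ : ℝ) : ℝ :=
  b₀ + W * ε₀ / (w + θ) * (Real.exp ((w + θ) * τ) - 1) +
    (c₁ - c₂) / w * (Real.exp (w * τ) - 1) +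
    c₂ / (w + η) * (Real.exp ((w + η) * τ) - 1)

noncomputable def f₂ (w τ : ℝ) : ℝ := Real.exp (w * τ)

/-- The comparison function `b̃` of Lemma 1. -/
noncomputable def btilde (w θ η W c₁ c₂ τ b₀ ε₀ : ℝ) : ℝ :=
  f₁ w θ η W c₁ c₂ τ b₀ ε₀ / f₂ w τ

/-- `Γ₁(b₀, ε₀)`: the infimum in `[0, ∞]` of the set
`{τ ≥ 0 : b̃(τ, b₀, ε₀) = 1 and (∂/∂τ)b̃(τ, b₀, ε₀) ≥ 0}` (`∞` if the set is empty). -/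
noncomputable def Γ₁ (w θ η W c₁ c₂ b₀ ε₀ : ℝ) : ℝ≥0∞ :=
  sInf {x : ℝ≥0∞ | ∃ τ : ℝ, 0 ≤ τ ∧ x = ENNReal.ofReal τ ∧
    btilde w θ η W c₁ c₂ τ b₀ ε₀ = 1 ∧
    0 ≤ deriv (fun s => btilde w θ η W c₁ c₂ s b₀ ε₀) τ}

/-!
`b̃` solves the linear equation `y' = H - w y` whose forcing `H` is strictly increasing. For such a
`y` and a level `a`, the function `e^{wτ} (y - a)` has derivative `e^{wτ} (H - w a)`, whose sign
changes at most once, from negative to positive. Hence `y` stays above `a` after any upcrossing of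
`a`, and if `y` starts at or below `a` it can only return to `a` by an upcrossing. So `y T > a`
means that an upcrossing has occurred before `T`, and `y T = a` that one occurs at `T`.
-/

/-- The trajectory `y` meets the level `a` at time `t` without decreasing there: the condition
imposed on the times `τ` in the definition of `Γ₁`. -/
def IsUpcrossing (y : ℝ → ℝ) (a t : ℝ) : Prop :=
  y t = a ∧ 0 ≤ deriv y t

/-- The first nonnegative upcrossing time, `∞` if there is none; `Γ₁` is the case `y = b̃`,
`a = 1`. -/
noncomputable def firstUpcrossing (y : ℝ → ℝ) (a : ℝ) : ℝ≥0∞ :=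
  sInf (ENNReal.ofReal '' {t | 0 ≤ t ∧ IsUpcrossing y a t})

/-- The forcing term `H` of the equation `b̃' = H - w b̃`. -/
noncomputable def forcing (θ η W c₁ c₂ ε₀ τ : ℝ) : ℝ :=
  W * ε₀ * Real.exp (θ * τ) + (c₁ - c₂) + c₂ * Real.exp (η * τ)

lemma exists_isUpcrossing {y : ℝ → ℝ} (hy : Differentiable ℝ y) {a s t : ℝ} (hst : s ≤ t)
    (hs : y s ≤ a) (ht : a < y t) : ∃ u ∈ Set.Ico s t, IsUpcrossing y a u := by
  by_contra! hnone
  have hle : y t ≤ a :=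
    image_le_of_deriv_right_lt_deriv_boundary (B := fun _ => a) (B' := fun _ => 0)
      hy.continuous.continuousOn (fun u _ => (hy u).hasDerivAt.hasDerivWithinAt) hs
      (fun u => hasDerivAt_const u a)
      (fun u hu hua => not_le.1 fun h => hnone u hu ⟨hua, h⟩) (Set.right_mem_Icc.2 hst)
  exact hle.not_gt ht

section LinearEquation

variable {w a : ℝ} {y H : ℝ → ℝ}

lemma hasDerivAt_exp_mul_sub_const {t : ℝ} (hy : HasDerivAt y (H t - w * y t) t) (a : ℝ) :
    HasDerivAt (fun s => Real.exp (w * s) * (y s - a)) (Real.exp (w * t) * (H t - w * a)) t := by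
  have hexp : HasDerivAt (fun s => Real.exp (w * s)) (Real.exp (w * t) * w) t :=
    (hasDerivAt_const_mul w).exp
  exact (hexp.mul (hy.sub_const a)).congr_deriv (by ring)

lemma strictMonoOn_exp_mul_sub_const (hy : ∀ t, HasDerivAt y (H t - w * y t) t)
    (hH : StrictMono H) {t : ℝ} (ht : w * a ≤ H t) :
    StrictMonoOn (fun s => Real.exp (w * s) * (y s - a)) (Set.Ici t) := by
  refine strictMonoOn_of_hasDerivWithinAt_pos (convex_Ici t)
    (HasDerivAt.continuousOn fun s _ => hasDerivAt_exp_mul_sub_const (hy s) a)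
    (fun s _ => (hasDerivAt_exp_mul_sub_const (hy s) a).hasDerivWithinAt) fun s hs => ?_
  rw [interior_Ici] at hs
  exact mul_pos (Real.exp_pos _) (sub_pos.2 (ht.trans_lt (hH hs)))

lemma strictAntiOn_exp_mul_sub_const (hy : ∀ t, HasDerivAt y (H t - w * y t) t)
    (hH : StrictMono H) {t : ℝ} (ht : H t ≤ w * a) :
    StrictAntiOn (fun s => Real.exp (w * s) * (y s - a)) (Set.Iic t) := by
  refine strictAntiOn_of_hasDerivWithinAt_neg (convex_Iic t)
    (HasDerivAt.continuousOn fun s _ => hasDerivAt_exp_mul_sub_const (hy s) a)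
    (fun s _ => (hasDerivAt_exp_mul_sub_const (hy s) a).hasDerivWithinAt) fun s hs => ?_
  rw [interior_Iic] at hs
  exact mul_neg_of_pos_of_neg (Real.exp_pos _) (sub_neg.2 ((hH hs).trans_le ht))

lemma IsUpcrossing.lt_of_lt (hy : ∀ t, HasDerivAt y (H t - w * y t) t) (hH : StrictMono H)
    {s t : ℝ} (ht : IsUpcrossing y a t) (hts : t < s) : a < y s := by
  obtain ⟨hta, hdt⟩ := ht
  rw [(hy t).deriv, hta, sub_nonneg] at hdt
  have hlt : Real.exp (w * t) * (y t - a) < Real.exp (w * s) * (y s - a) :=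
    strictMonoOn_exp_mul_sub_const hy hH hdt Set.self_mem_Ici hts.le hts
  rw [hta, sub_self, mul_zero] at hlt
  exact sub_pos.1 (pos_of_mul_pos_right hlt (Real.exp_pos _).le)

lemma isUpcrossing_of_le_of_eq (hy : ∀ t, HasDerivAt y (H t - w * y t) t) (hH : StrictMono H)
    {s t : ℝ} (hst : s < t) (hs : y s ≤ a) (ht : y t = a) : IsUpcrossing y a t := by
  refine ⟨ht, ?_⟩
  rw [(hy t).deriv, ht, sub_nonneg]
  by_contra! hneg
  have hlt : Real.exp (w * t) * (y t - a) < Real.exp (w * s) * (y s - a) :=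
    strictAntiOn_exp_mul_sub_const hy hH hneg.le hst.le Set.self_mem_Iic hst
  rw [ht, sub_self, mul_zero] at hlt
  exact hs.not_gt (sub_pos.1 (pos_of_mul_pos_right hlt (Real.exp_pos _).le))

lemma firstUpcrossing_lt_ofReal_iff (hy : ∀ t, HasDerivAt y (H t - w * y t) t)
    (hH : StrictMono H) (h0 : y 0 ≤ a) {T : ℝ} (hT : 0 ≤ T) :
    firstUpcrossing y a < ENNReal.ofReal T ↔ a < y T := by
  rw [firstUpcrossing, sInf_lt_iff, Set.exists_mem_image]
  constructor
  · rintro ⟨t, ⟨ht0, ht⟩, htT⟩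
    exact ht.lt_of_lt hy hH ((ENNReal.ofReal_lt_ofReal_iff_of_nonneg ht0).1 htT)
  · intro hlt
    obtain ⟨t, ⟨ht0, htT⟩, ht⟩ :=
      exists_isUpcrossing (fun t => (hy t).differentiableAt) hT h0 hlt
    exact ⟨t, ⟨ht0, ht⟩, (ENNReal.ofReal_lt_ofReal_iff_of_nonneg ht0).2 htT⟩

lemma firstUpcrossing_le_ofReal_iff (hy : ∀ t, HasDerivAt y (H t - w * y t) t)
    (hH : StrictMono H) (h0 : y 0 ≤ a) {T : ℝ} (hT : 0 < T) :
    firstUpcrossing y a ≤ ENNReal.ofReal T ↔ a ≤ y T := by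
  constructor
  · intro hle
    have hlater : ∀ s ∈ Set.Ioi T, a ≤ y s := fun s hs =>
      ((firstUpcrossing_lt_ofReal_iff hy hH h0 (hT.trans hs).le).1 <|
        hle.trans_lt ((ENNReal.ofReal_lt_ofReal_iff_of_nonneg hT.le).2 hs)).le
    exact ge_of_tendsto (hy T).continuousAt.continuousWithinAt.tendsto
      (eventually_mem_nhdsWithin.mono hlater)
  · intro hle
    rcases hle.eq_or_lt with heq | hlt
    · exact sInf_le ⟨T, ⟨hT.le, isUpcrossing_of_le_of_eq hy hH hT h0 heq.symm⟩, rfl⟩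
    · exact ((firstUpcrossing_lt_ofReal_iff hy hH h0 hT.le).2 hlt).le

lemma firstUpcrossing_eq_ofReal_iff (hy : ∀ t, HasDerivAt y (H t - w * y t) t)
    (hH : StrictMono H) (h0 : y 0 ≤ a) {T : ℝ} (hT : 0 < T) :
    firstUpcrossing y a = ENNReal.ofReal T ↔ y T = a := by
  rw [eq_iff_le_not_lt, firstUpcrossing_le_ofReal_iff hy hH h0 hT,
    firstUpcrossing_lt_ofReal_iff hy hH h0 hT.le, ← eq_iff_le_not_lt, eq_comm]

end LinearEquation

lemma Γ₁_eq_firstUpcrossing (w θ η W c₁ c₂ b₀ ε₀ : ℝ) :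
    Γ₁ w θ η W c₁ c₂ b₀ ε₀ = firstUpcrossing (fun τ => btilde w θ η W c₁ c₂ τ b₀ ε₀) 1 := by
  refine congrArg sInf (Set.ext fun x => exists_congr fun τ => ?_)
  simp only [IsUpcrossing, Set.mem_ofPred_eq, eq_comm (a := x)]
  tauto

lemma btilde_zero (w θ η W c₁ c₂ b₀ ε₀ : ℝ) : btilde w θ η W c₁ c₂ 0 b₀ ε₀ = b₀ := by
  simp [btilde, f₁, f₂]

lemma hasDerivAt_mul_exp_sub_one {k : ℝ} (hk : k ≠ 0) (c t : ℝ) :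
    HasDerivAt (fun s => c / k * (Real.exp (k * s) - 1)) (c * Real.exp (k * t)) t := by
  have hexp : HasDerivAt (fun s => Real.exp (k * s)) (Real.exp (k * t) * k) t :=
    (hasDerivAt_const_mul k).exp
  exact ((hexp.sub_const 1).const_mul (c / k)).congr_deriv (by field_simp)

section Btilde

variable {w θ η : ℝ}

lemma hasDerivAt_f₁ (hw : w ≠ 0) (hwθ : w + θ ≠ 0) (hwη : w + η ≠ 0) (W c₁ c₂ b₀ ε₀ τ : ℝ) :
    HasDerivAt (fun s => f₁ w θ η W c₁ c₂ s b₀ ε₀)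
      (Real.exp (w * τ) * forcing θ η W c₁ c₂ ε₀ τ) τ := by
  refine ((((hasDerivAt_mul_exp_sub_one hwθ (W * ε₀) τ).const_add b₀).add
    (hasDerivAt_mul_exp_sub_one hw (c₁ - c₂) τ)).add
    (hasDerivAt_mul_exp_sub_one hwη c₂ τ)).congr_deriv ?_
  rw [forcing, add_mul w θ, add_mul w η, Real.exp_add, Real.exp_add]
  ring

lemma hasDerivAt_btilde (hw : w ≠ 0) (hwθ : w + θ ≠ 0) (hwη : w + η ≠ 0)
    (W c₁ c₂ b₀ ε₀ τ : ℝ) :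
    HasDerivAt (fun s => btilde w θ η W c₁ c₂ s b₀ ε₀)
      (forcing θ η W c₁ c₂ ε₀ τ - w * btilde w θ η W c₁ c₂ τ b₀ ε₀) τ := by
  have hf₂ : HasDerivAt (f₂ w) (f₂ w τ * w) τ := (hasDerivAt_const_mul w).exp
  have hne : f₂ w τ ≠ 0 := (Real.exp_pos _).ne'
  refine ((hasDerivAt_f₁ hw hwθ hwη W c₁ c₂ b₀ ε₀ τ).div hf₂ hne).congr_deriv ?_
  rw [btilde, ← f₂]
  field_simp

lemma strictMono_forcing {W c₂ ε₀ : ℝ} (hθ : 0 < θ) (hη : 0 ≤ η) (hWε₀ : 0 < W * ε₀)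
    (hc₂ : 0 ≤ c₂) (c₁ : ℝ) : StrictMono (forcing θ η W c₁ c₂ ε₀) := by
  intro s t hst
  have hle : c₂ * Real.exp (η * s) ≤ c₂ * Real.exp (η * t) := by gcongr
  have hlt : W * ε₀ * Real.exp (θ * s) < W * ε₀ * Real.exp (θ * t) := by gcongr
  exact add_lt_add_of_lt_of_le (add_lt_add_left hlt (c₁ - c₂)) hle

end Btilde

theorem stmt_11_general {w θ η W c₁ c₂ T₀ b₀ ε₀ : ℝ} (hw : 0 < w) (hθ : 0 < θ) (hη : 0 ≤ η)
    (hWε₀ : 0 < W * ε₀) (hc₂ : 0 ≤ c₂) (hT₀ : 0 < T₀) (hb₀ : b₀ ≤ 1) :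
    (ENNReal.ofReal T₀ < Γ₁ w θ η W c₁ c₂ b₀ ε₀ ↔ btilde w θ η W c₁ c₂ T₀ b₀ ε₀ < 1) ∧
    (Γ₁ w θ η W c₁ c₂ b₀ ε₀ < ENNReal.ofReal T₀ ↔ 1 < btilde w θ η W c₁ c₂ T₀ b₀ ε₀) ∧
    (Γ₁ w θ η W c₁ c₂ b₀ ε₀ = ENNReal.ofReal T₀ ↔ btilde w θ η W c₁ c₂ T₀ b₀ ε₀ = 1) := by
  have hode := hasDerivAt_btilde hw.ne' (add_pos hw hθ).ne' (add_pos_of_pos_of_nonneg hw hη).ne'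
    W c₁ c₂ b₀ ε₀
  have hmono := strictMono_forcing hθ hη hWε₀ hc₂ c₁
  have hinit := (btilde_zero w θ η W c₁ c₂ b₀ ε₀).trans_le hb₀
  rw [Γ₁_eq_firstUpcrossing]
  refine ⟨?_, firstUpcrossing_lt_ofReal_iff hode hmono hinit hT₀.le,
    firstUpcrossing_eq_ofReal_iff hode hmono hinit hT₀⟩
  rw [← not_le, firstUpcrossing_le_ofReal_iff hode hmono hinit hT₀, not_le]

/-- Lemma 5: algebraic conditions to check the position of `Γ₁(b₀, ε₀)`
relative to a time horizon `T°`. -/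
theorem stmt_11 (w θ η W c₁ c₂ : ℝ) (hw : 0 < w) (hθ : 0 < θ) (hη : 0 < η)
    (hW : 0 < W) (hc₁ : 0 ≤ c₁) (hc₂ : 0 ≤ c₂)
    (T₀ : ℝ) (hT₀ : 0 < T₀) (b₀ ε₀ : ℝ) (hb₀ : b₀ ∈ Set.Icc (0 : ℝ) 1) (hε₀ : 0 < ε₀) :
    (ENNReal.ofReal T₀ < Γ₁ w θ η W c₁ c₂ b₀ ε₀ ↔ btilde w θ η W c₁ c₂ T₀ b₀ ε₀ < 1) ∧
    (Γ₁ w θ η W c₁ c₂ b₀ ε₀ < ENNReal.ofReal T₀ ↔ 1 < btilde w θ η W c₁ c₂ T₀ b₀ ε₀) ∧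
    (Γ₁ w θ η W c₁ c₂ b₀ ε₀ = ENNReal.ofReal T₀ ↔ btilde w θ η W c₁ c₂ T₀ b₀ ε₀ = 1) :=
  stmt_11_general hw hθ hη.le (mul_pos hW hε₀) hc₂ hT₀ hb₀.2
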